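/- arXiv:2004.02722 — 3 statements merged into one kernel-verified Lean document; each statement's English description precedes it below -/
import Mathlib

section
/- Let X and Q be real Hilbert spaces, and let a : X × X → ℝ and b : X × Q → ℝ be bilinear forms. Assume there exist positive constants α, C, D, β such that: (i) a(u,u) ≥ α‖u‖_X² for all u ∈ X; (ii) |a(u,v)| ≤ C‖u‖_X ‖v‖_X for all u,v ∈ X; (iii) |b(u,μ)| ≤ D‖u‖_X ‖μ‖_Q for all u ∈ X, μ ∈ Q; (iv) sup_{v ∈ X, v ≠ 0} b(v,μ)/‖v‖_X ≥ β‖μ‖_Q for all μ ∈ Q. Then for every pair of continuous linear functionals c : X → ℝ and d : Q → ℝ there exists a unique pair (u, λ) ∈ X × Q such that a(u,v) + b(v,λ) = c(v) for all v ∈ X and b(u,μ) = d(μ) for all μ ∈ Q. -/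
/-!
Brezzi's splitting. Represent `b` by an operator `T : Q → X` with `⟪T μ, v⟫ = b v μ`. The inf-sup
condition says that `T` is bounded below, so it is injective with closed range: hence `u ↦ b u` is
onto the dual of `Q`, and the functionals vanishing on `ker b` are exactly those of the form
`v ↦ b v μ`. To solve the system, choose `u₀` with `b u₀ = d`, use Lax–Milgram on `ker b` to find
`w ∈ ker b` such that `c - a (u₀ + w)` vanishes on `ker b`, and write this functional as
`v ↦ b v λ`.
-/

open scoped InnerProductSpace NNReal

theorem sSup_div_norm_le_opNorm {E : Type*} [SeminormedAddCommGroup E] [NormedSpace ℝ E]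
    (f : E →L[ℝ] ℝ) : sSup {r : ℝ | ∃ v : E, v ≠ 0 ∧ r = f v / ‖v‖} ≤ ‖f‖ := by
  refine Real.sSup_le ?_ (norm_nonneg f)
  rintro _ ⟨v, -, rfl⟩
  calc f v / ‖v‖ ≤ ‖f v‖ / ‖v‖ := by gcongr; exact Real.le_norm_self _
    _ ≤ ‖f‖ := f.ratio_le_opNorm v

theorem exists_forall_apply_eq_of_isCoercive {V : Type*} [NormedAddCommGroup V]
    [InnerProductSpace ℝ V] [CompleteSpace V] {B : V →L[ℝ] V →L[ℝ] ℝ} (hB : IsCoercive B)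
    (f : V →L[ℝ] ℝ) : ∃ u, ∀ v, B u v = f v := by
  obtain ⟨u, hu⟩ := hB.continuousLinearEquivOfBilin.surjective
    ((InnerProductSpace.toDual ℝ V).symm f)
  refine ⟨u, fun v => ?_⟩
  rw [← hB.continuousLinearEquivOfBilin_apply, hu, InnerProductSpace.toDual_symm_apply]

theorem exists_forall_inner_eq_of_antilipschitz {𝕜 E H : Type*} [RCLike 𝕜]
    [NormedAddCommGroup E] [NormedSpace 𝕜 E] [CompleteSpace E]
    [NormedAddCommGroup H] [InnerProductSpace 𝕜 H] [CompleteSpace H]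
    {T : E →L[𝕜] H} {K : ℝ≥0} (hT : AntilipschitzWith K T) (f : E →L[𝕜] 𝕜) :
    ∃ x, ∀ y, ⟪x, T y⟫_𝕜 = f y := by
  have hclosed : IsClosed (Set.range T) := hT.isClosed_range T.uniformContinuous
  have : CompleteSpace T.range := hclosed.completeSpace_coe
  let e := T.equivRange hT.injective hclosed
  let x := (InnerProductSpace.toDual 𝕜 T.range).symm (f ∘L e.symm)
  refine ⟨x, fun y => ?_⟩
  calc ⟪(x : H), T y⟫_𝕜 = ⟪x, e y⟫_𝕜 := rfl
    _ = f (e.symm (e y)) := InnerProductSpace.toDual_symm_apply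
    _ = f y := by rw [e.symm_apply_apply]

section Riesz

variable {X Q : Type*} [NormedAddCommGroup X] [InnerProductSpace ℝ X] [CompleteSpace X]
  [NormedAddCommGroup Q] [NormedSpace ℝ Q]

/-- The Riesz operator `T : Q → X` of a bounded bilinear form `b` on `X × Q`,
determined by `⟪T μ, v⟫ = b v μ`. The Riesz isometry is only semilinear as typed; the composite is
linear because conjugation on `ℝ` is the identity. -/
noncomputable def rieszOperator (b : X →L[ℝ] Q →L[ℝ] ℝ) : Q →L[ℝ] X :=
  ((InnerProductSpace.toDual ℝ X).symm : (X →L[ℝ] ℝ) →L⋆[ℝ] X) ∘L b.flip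

theorem inner_rieszOperator (b : X →L[ℝ] Q →L[ℝ] ℝ) (μ : Q) (v : X) :
    ⟪rieszOperator b μ, v⟫_ℝ = b v μ :=
  InnerProductSpace.toDual_symm_apply (𝕜 := ℝ) (x := v) (y := b.flip μ)

theorem antilipschitz_rieszOperator {b : X →L[ℝ] Q →L[ℝ] ℝ} {K : ℝ≥0}
    (hb : AntilipschitzWith K b.flip) : AntilipschitzWith K (rieszOperator b) := by
  simpa only [mul_one] using! (InnerProductSpace.toDual ℝ X).symm.antilipschitz.comp hb

theorem orthogonal_range_rieszOperator (b : X →L[ℝ] Q →L[ℝ] ℝ) :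
    (rieszOperator b).rangeᗮ = b.ker := by
  ext v
  simp [Submodule.mem_orthogonal, inner_rieszOperator, ContinuousLinearMap.ext_iff]

variable [CompleteSpace Q] {b : X →L[ℝ] Q →L[ℝ] ℝ} {K : ℝ≥0}

theorem surjective_of_antilipschitz_flip (hb : AntilipschitzWith K b.flip) :
    Function.Surjective b := by
  intro d
  obtain ⟨u, hu⟩ := exists_forall_inner_eq_of_antilipschitz (antilipschitz_rieszOperator hb) d
  refine ⟨u, ContinuousLinearMap.ext fun μ => ?_⟩
  rw [← inner_rieszOperator, real_inner_comm, hu]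

theorem exists_flip_eq_of_forall_mem_ker (hb : AntilipschitzWith K b.flip) {f : X →L[ℝ] ℝ}
    (hf : ∀ v ∈ b.ker, f v = 0) : ∃ μ, b.flip μ = f := by
  let x := (InnerProductSpace.toDual ℝ X).symm f
  have hx : x ∈ (rieszOperator b).rangeᗮᗮ := by
    rw [orthogonal_range_rieszOperator, Submodule.mem_orthogonal']
    exact fun v hv => InnerProductSpace.toDual_symm_apply.trans (hf v hv)
  rw [Submodule.orthogonal_orthogonal_eq_closure,
    ContinuousLinearMap.closed_range_of_antilipschitz (antilipschitz_rieszOperator hb)] at hx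
  obtain ⟨μ, hμ⟩ := hx
  exact ⟨μ, (InnerProductSpace.toDual ℝ X).symm.injective hμ⟩

end Riesz

section SaddlePoint

variable {X Q : Type*} [NormedAddCommGroup X] [NormedAddCommGroup Q] [NormedSpace ℝ Q]

/-- The operator `(u, λ) ↦ (a u · + b · λ, b u)` of the saddle point problem, with values in the
product of the dual spaces: `(u, λ)` solves the problem with data `(c, d)` iff it is mapped
to `(c, d)`. -/
noncomputable def saddlePointOperator [NormedSpace ℝ X]
    (a : X →L[ℝ] X →L[ℝ] ℝ) (b : X →L[ℝ] Q →L[ℝ] ℝ) :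
    X × Q →L[ℝ] (X →L[ℝ] ℝ) × (Q →L[ℝ] ℝ) :=
  (a.coprod b.flip).prod (b ∘L ContinuousLinearMap.fst ℝ X Q)

theorem saddlePointOperator_injective [NormedSpace ℝ X]
    {a : X →L[ℝ] X →L[ℝ] ℝ} {b : X →L[ℝ] Q →L[ℝ] ℝ}
    (ha : IsCoercive (a.bilinearComp b.ker.subtypeL b.ker.subtypeL))
    (hb : Function.Injective b.flip) : Function.Injective (saddlePointOperator a b) := by
  refine (injective_iff_map_eq_zero _).2 fun ⟨u, l⟩ h => ?_
  obtain ⟨h₁, hu⟩ : a u + b.flip l = 0 ∧ b u = 0 := Prod.ext_iff.1 h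
  have hauu : a u u = 0 := by
    simpa [hu] using DFunLike.congr_fun h₁ u
  obtain ⟨α, hα, hcoer⟩ := ha
  have hu₀ : u = 0 := by
    have hle : α * ‖u‖ * ‖u‖ ≤ 0 := (hcoer ⟨u, hu⟩).trans_eq hauu
    rw [mul_assoc] at hle
    exact norm_eq_zero.1 (mul_self_eq_zero.1
      ((nonpos_of_mul_nonpos_right hle hα).antisymm (mul_self_nonneg _)))
  have hl : b.flip l = b.flip 0 := by simpa [hu₀] using h₁
  rw [hu₀, hb hl, Prod.mk_zero_zero]

variable [InnerProductSpace ℝ X] [CompleteSpace X] [CompleteSpace Q]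

theorem saddlePointOperator_surjective {a : X →L[ℝ] X →L[ℝ] ℝ} {b : X →L[ℝ] Q →L[ℝ] ℝ} {K : ℝ≥0}
    (ha : IsCoercive (a.bilinearComp b.ker.subtypeL b.ker.subtypeL))
    (hb : AntilipschitzWith K b.flip) : Function.Surjective (saddlePointOperator a b) := by
  rintro ⟨c, d⟩
  obtain ⟨u₀, hu₀⟩ : ∃ u₀, b u₀ = d := surjective_of_antilipschitz_flip hb d
  obtain ⟨w, hw⟩ := exists_forall_apply_eq_of_isCoercive ha ((c - a u₀) ∘L b.ker.subtypeL)
  have hker : ∀ v ∈ b.ker, (c - a (u₀ + w)) v = 0 := fun v hv => by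
    have hwv : a w v = c v - a u₀ v := hw ⟨v, hv⟩
    simp [hwv]
  obtain ⟨l, hl⟩ := exists_flip_eq_of_forall_mem_ker hb hker
  have hbw : b w = 0 := w.2
  refine ⟨(u₀ + w, l), Prod.ext ?_ ?_⟩
  · change a (u₀ + w) + b.flip l = c
    rw [hl, add_sub_cancel]
  · change b (u₀ + w) = d
    rw [map_add, hbw, add_zero, hu₀]

theorem saddle_point_wellposed_general (a : X →L[ℝ] X →L[ℝ] ℝ) (b : X →L[ℝ] Q →L[ℝ] ℝ) {α β : ℝ}
    (hα : 0 < α) (hβ : 0 < β) (hcoer : ∀ u ∈ b.ker, α * ‖u‖ ^ 2 ≤ a u u)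
    (hinfsup : ∀ μ : Q, β * ‖μ‖ ≤ ‖b.flip μ‖) (c : X →L[ℝ] ℝ) (d : Q →L[ℝ] ℝ) :
    ∃! p : X × Q, (∀ v : X, a p.1 v + b v p.2 = c v) ∧ (∀ μ : Q, b p.1 μ = d μ) := by
  have ha : IsCoercive (a.bilinearComp b.ker.subtypeL b.ker.subtypeL) :=
    ⟨α, hα, fun u => by simpa [sq, mul_assoc] using hcoer u u.2⟩
  have hb : AntilipschitzWith (β⁻¹).toNNReal b.flip :=
    b.flip.antilipschitz_of_bound fun μ => by
      rw [Real.coe_toNNReal _ (by positivity), ← div_eq_inv_mul, le_div_iff₀' hβ]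
      exact hinfsup μ
  have hbij : Function.Bijective (saddlePointOperator a b) :=
    ⟨saddlePointOperator_injective ha hb.injective, saddlePointOperator_surjective ha hb⟩
  simpa [saddlePointOperator, Prod.ext_iff, ContinuousLinearMap.ext_iff]
    using hbij.existsUnique (c, d)

end SaddlePoint

/-- **Relaxed Brezzi conditions imply well-posedness of the saddle point problem.**
Let `X` and `Q` be real Hilbert spaces, `a : X × X → ℝ` and `b : X × Q → ℝ` bilinear
forms such that `a` is coercive on `X` and bounded, `b` is bounded, and `b` satisfies
the inf-sup condition.  Then for all continuous linear functionals `c : X → ℝ` and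
`d : Q → ℝ` there exists a unique pair `(u, λ)` with
`a u v + b v λ = c v` for all `v` and `b u μ = d μ` for all `μ`. -/
theorem saddle_point_wellposed
    {X Q : Type*}
    [NormedAddCommGroup X] [InnerProductSpace ℝ X] [CompleteSpace X]
    [NormedAddCommGroup Q] [InnerProductSpace ℝ Q] [CompleteSpace Q]
    (a : X →ₗ[ℝ] X →ₗ[ℝ] ℝ) (b : X →ₗ[ℝ] Q →ₗ[ℝ] ℝ)
    (α C D β : ℝ) (hα : 0 < α) (hC : 0 < C) (hD : 0 < D) (hβ : 0 < β)
    (hcoer : ∀ u : X, α * ‖u‖ ^ 2 ≤ a u u)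
    (habd : ∀ u v : X, |a u v| ≤ C * ‖u‖ * ‖v‖)
    (hbbd : ∀ (u : X) (μ : Q), |b u μ| ≤ D * ‖u‖ * ‖μ‖)
    (hinfsup : ∀ μ : Q, β * ‖μ‖ ≤ sSup {r : ℝ | ∃ v : X, v ≠ 0 ∧ r = b v μ / ‖v‖})
    (c : X →L[ℝ] ℝ) (d : Q →L[ℝ] ℝ) :
    ∃! p : X × Q, (∀ v : X, a p.1 v + b v p.2 = c v) ∧ (∀ μ : Q, b p.1 μ = d μ) :=
  saddle_point_wellposed_general (a.mkContinuous₂ C habd) (b.mkContinuous₂ D hbbd) hα hβ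
    (fun u _ => hcoer u)
    (fun μ => (hinfsup μ).trans (sSup_div_norm_le_opNorm ((b.mkContinuous₂ D hbbd).flip μ))) c d
end

section
/- Let X and Q be real Hilbert spaces, and let a : X × X → ℝ and b : X × Q → ℝ be bilinear forms satisfying, for positive constants α, C, D, β: a(u,u) ≥ α‖u‖_X² for all u ∈ X; |a(u,v)| ≤ C‖u‖_X ‖v‖_X for all u,v ∈ X; |b(u,μ)| ≤ D‖u‖_X ‖μ‖_Q for all u ∈ X, μ ∈ Q; and sup_{v ∈ X, v ≠ 0} b(v,μ)/‖v‖_X ≥ β‖μ‖_Q for all μ ∈ Q. Then there exists a constant M > 0, depending only on α, C, D, β, such that whenever (u, λ) ∈ X × Q satisfies a(u,v) + b(v,λ) = c(v) for all v ∈ X and b(u,μ) = d(μ) for all μ ∈ Q, for continuous linear functionals c : X → ℝ and d : Q → ℝ, the stability estimate ‖u‖_X + ‖λ‖_Q ≤ M(‖c‖_{X*} + ‖d‖_{Q*}) holds. -/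
/-!
The first equation together with the inf-sup condition gives `β ‖λ‖ ≤ ‖c‖ + C ‖u‖`. Testing with
`v = u` and `μ = λ` cancels `b`, and coercivity gives `α ‖u‖² ≤ ‖c‖ ‖u‖ + ‖d‖ ‖λ‖`. Eliminating
`‖λ‖` and writing `p = ‖c‖ / α`, `r = ‖d‖ / β` leaves `‖u‖² ≤ (p + (C / α) r) ‖u‖ + p r`, whence
`‖u‖ ≤ p + (1 + C / α) r`, the classical Brezzi bound; the bound on `‖λ‖` then follows from the
first inequality.
-/

theorem le_add_of_sq_le_mul_add_mul {p q r x : ℝ} (hp : 0 ≤ p) (hpq : p ≤ q) (hr : 0 ≤ r)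
    (h : x ^ 2 ≤ q * x + p * r) : x ≤ q + r := by
  by_contra! hx
  have hx_pos : 0 < x := by linarith
  have hqr : 0 < x * (x - (q + r)) := mul_pos hx_pos (sub_pos.mpr hx)
  have hpr : 0 ≤ r * (x - p) := mul_nonneg hr (by linarith)
  linarith

section SaddlePoint

variable {X Q : Type*} [SeminormedAddCommGroup X] [NormedSpace ℝ X]
  [SeminormedAddCommGroup Q] [NormedSpace ℝ Q]

/-- The inf-sup condition `β ‖μ‖ ≤ sup_v b(v, μ) / ‖v‖`, expressed through the upper bounds `K` of
the quotients, so that the supremum may be infinite. Requiring `0 ≤ K` gives the supremum over an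
empty set the value `0`. -/
def SatisfiesInfSup (b : X →ₗ[ℝ] Q →ₗ[ℝ] ℝ) (β : ℝ) : Prop :=
  ∀ (μ : Q) (K : ℝ), 0 ≤ K → (∀ v, b v μ ≤ K * ‖v‖) → β * ‖μ‖ ≤ K

/-- The pair `(u, lam)` solves the saddle point problem with forms `a`, `b` and data `c`, `d`. -/
structure IsSaddlePointSolution (a : X →ₗ[ℝ] X →ₗ[ℝ] ℝ) (b : X →ₗ[ℝ] Q →ₗ[ℝ] ℝ)
    (c : X →L[ℝ] ℝ) (d : Q →L[ℝ] ℝ) (u : X) (lam : Q) : Prop where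
  primal_eq : ∀ v, a u v + b v lam = c v
  constraint_eq : ∀ μ, b u μ = d μ

variable {a : X →ₗ[ℝ] X →ₗ[ℝ] ℝ} {b : X →ₗ[ℝ] Q →ₗ[ℝ] ℝ} {c : X →L[ℝ] ℝ} {d : Q →L[ℝ] ℝ}
  {u : X} {lam : Q} {α C β : ℝ}

theorem satisfiesInfSup_of_le_sSup
    (h : ∀ μ : Q, β * ‖μ‖ ≤ sSup {r : ℝ | ∃ v : X, v ≠ 0 ∧ r = b v μ / ‖v‖}) :
    SatisfiesInfSup b β := by
  intro μ K hK hb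
  refine (h μ).trans (Real.sSup_le ?_ hK)
  rintro _ ⟨v, -, rfl⟩
  exact div_le_of_le_mul₀ (norm_nonneg v) hK (hb v)

namespace IsSaddlePointSolution

theorem energy_eq (h : IsSaddlePointSolution a b c d u lam) : a u u = c u - d lam := by
  linarith [h.primal_eq u, h.constraint_eq lam]

theorem mul_norm_sq_le (h : IsSaddlePointSolution a b c d u lam)
    (ha_coercive : ∀ v, α * ‖v‖ ^ 2 ≤ a v v) :
    α * ‖u‖ ^ 2 ≤ ‖c‖ * ‖u‖ + ‖d‖ * ‖lam‖ :=
  calc α * ‖u‖ ^ 2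
    _ ≤ a u u := ha_coercive u
    _ = c u - d lam := h.energy_eq
    _ ≤ |c u| + |d lam| := (le_abs_self _).trans (abs_sub _ _)
    _ ≤ ‖c‖ * ‖u‖ + ‖d‖ * ‖lam‖ := add_le_add (c.le_opNorm u) (d.le_opNorm lam)

theorem mul_norm_multiplier_le (h : IsSaddlePointSolution a b c d u lam) (hC : 0 ≤ C)
    (ha_bdd : ∀ v w, |a v w| ≤ C * ‖v‖ * ‖w‖) (hb : SatisfiesInfSup b β) :
    β * ‖lam‖ ≤ ‖c‖ + C * ‖u‖ := by
  refine hb lam _ (by positivity) fun v ↦ ?_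
  calc b v lam
    _ = c v - a u v := by linarith [h.primal_eq v]
    _ ≤ |c v| + |a u v| := (le_abs_self _).trans (abs_sub _ _)
    _ ≤ ‖c‖ * ‖v‖ + C * ‖u‖ * ‖v‖ := add_le_add (c.le_opNorm v) (ha_bdd u v)
    _ = (‖c‖ + C * ‖u‖) * ‖v‖ := by ring

theorem norm_primal_le (h : IsSaddlePointSolution a b c d u lam)
    (hα : 0 < α) (hC : 0 ≤ C) (hβ : 0 < β) (ha_coercive : ∀ v, α * ‖v‖ ^ 2 ≤ a v v)
    (ha_bdd : ∀ v w, |a v w| ≤ C * ‖v‖ * ‖w‖) (hb : SatisfiesInfSup b β) :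
    ‖u‖ ≤ ‖c‖ / α + (1 + C / α) * (‖d‖ / β) := by
  have hlam : ‖lam‖ ≤ (‖c‖ + C * ‖u‖) / β :=
    (le_div_iff₀' hβ).mpr (h.mul_norm_multiplier_le hC ha_bdd hb)
  have hquadratic : ‖u‖ ^ 2 ≤
      (‖c‖ / α + C / α * (‖d‖ / β)) * ‖u‖ + ‖c‖ / α * (‖d‖ / β) :=
    calc ‖u‖ ^ 2
      _ ≤ (‖c‖ * ‖u‖ + ‖d‖ * ‖lam‖) / α := (le_div_iff₀' hα).mpr (h.mul_norm_sq_le ha_coercive)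
      _ ≤ (‖c‖ * ‖u‖ + ‖d‖ * ((‖c‖ + C * ‖u‖) / β)) / α := by gcongr
      _ = (‖c‖ / α + C / α * (‖d‖ / β)) * ‖u‖ + ‖c‖ / α * (‖d‖ / β) := by ring
  calc ‖u‖
    _ ≤ (‖c‖ / α + C / α * (‖d‖ / β)) + ‖d‖ / β :=
      le_add_of_sq_le_mul_add_mul (by positivity) (le_add_of_nonneg_right (by positivity))
        (by positivity) hquadratic
    _ = ‖c‖ / α + (1 + C / α) * (‖d‖ / β) := by ring

theorem norm_multiplier_le (h : IsSaddlePointSolution a b c d u lam)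
    (hα : 0 < α) (hC : 0 ≤ C) (hβ : 0 < β) (ha_coercive : ∀ v, α * ‖v‖ ^ 2 ≤ a v v)
    (ha_bdd : ∀ v w, |a v w| ≤ C * ‖v‖ * ‖w‖) (hb : SatisfiesInfSup b β) :
    ‖lam‖ ≤ (1 + C / α) / β * (‖c‖ + C / β * ‖d‖) :=
  calc ‖lam‖
    _ ≤ (‖c‖ + C * ‖u‖) / β := (le_div_iff₀' hβ).mpr (h.mul_norm_multiplier_le hC ha_bdd hb)
    _ ≤ (‖c‖ + C * (‖c‖ / α + (1 + C / α) * (‖d‖ / β))) / β := by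
      gcongr
      exact h.norm_primal_le hα hC hβ ha_coercive ha_bdd hb
    _ = (1 + C / α) / β * (‖c‖ + C / β * ‖d‖) := by ring

end IsSaddlePointSolution

theorem saddle_point_stability_general (hα : 0 < α) (hC : 0 ≤ C) (hβ : 0 < β)
    (ha_coercive : ∀ v, α * ‖v‖ ^ 2 ≤ a v v) (ha_bdd : ∀ v w, |a v w| ≤ C * ‖v‖ * ‖w‖)
    (hb : SatisfiesInfSup b β) (h : IsSaddlePointSolution a b c d u lam) :
    ‖u‖ + ‖lam‖ ≤ (1 / α + (1 + C / α) / β * (2 + C / β)) * (‖c‖ + ‖d‖) := by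
  have hu := h.norm_primal_le hα hC hβ ha_coercive ha_bdd hb
  have hlam := h.norm_multiplier_le hα hC hβ ha_coercive ha_bdd hb
  have hc_le : ‖c‖ ≤ ‖c‖ + ‖d‖ := le_add_of_nonneg_right (norm_nonneg d)
  have hd_le : ‖d‖ ≤ ‖c‖ + ‖d‖ := le_add_of_nonneg_left (norm_nonneg c)
  calc ‖u‖ + ‖lam‖
    _ ≤ (‖c‖ / α + (1 + C / α) * (‖d‖ / β)) + (1 + C / α) / β * (‖c‖ + C / β * ‖d‖) :=
      add_le_add hu hlam
    _ ≤ ((‖c‖ + ‖d‖) / α + (1 + C / α) * ((‖c‖ + ‖d‖) / β)) +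
        (1 + C / α) / β * ((‖c‖ + ‖d‖) + C / β * (‖c‖ + ‖d‖)) := by gcongr
    _ = (1 / α + (1 + C / α) / β * (2 + C / β)) * (‖c‖ + ‖d‖) := by ring

end SaddlePoint

/-- **Stability estimate for the saddle point problem.**
Under the relaxed Brezzi conditions with constants `α, C, D, β`, there exists a
constant `M > 0`, depending only on `α, C, D, β`, such that every solution `(u, λ)`
of the saddle point problem with data `c, d` satisfies
`‖u‖ + ‖λ‖ ≤ M (‖c‖ + ‖d‖)`. -/
theorem saddle_point_stability (α C D β : ℝ)
    (hα : 0 < α) (hC : 0 < C) (hD : 0 < D) (hβ : 0 < β) :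
    ∃ M : ℝ, 0 < M ∧
      ∀ (X Q : Type) [NormedAddCommGroup X] [InnerProductSpace ℝ X]
        [CompleteSpace X] [NormedAddCommGroup Q] [InnerProductSpace ℝ Q]
        [CompleteSpace Q]
        (a : X →ₗ[ℝ] X →ₗ[ℝ] ℝ) (b : X →ₗ[ℝ] Q →ₗ[ℝ] ℝ),
        (∀ u : X, α * ‖u‖ ^ 2 ≤ a u u) →
        (∀ u v : X, |a u v| ≤ C * ‖u‖ * ‖v‖) →
        (∀ (u : X) (μ : Q), |b u μ| ≤ D * ‖u‖ * ‖μ‖) →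
        (∀ μ : Q, β * ‖μ‖ ≤ sSup {r : ℝ | ∃ v : X, v ≠ 0 ∧ r = b v μ / ‖v‖}) →
        ∀ (c : X →L[ℝ] ℝ) (d : Q →L[ℝ] ℝ) (u : X) (lam : Q),
          (∀ v : X, a u v + b v lam = c v) →
          (∀ μ : Q, b u μ = d μ) →
          ‖u‖ + ‖lam‖ ≤ M * (‖c‖ + ‖d‖) := by
  refine ⟨1 / α + (1 + C / α) / β * (2 + C / β), by positivity, ?_⟩
  intro X Q _ _ _ _ _ _ a b ha_coercive ha_bdd _ hb c d u lam hprimal hconstraint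
  exact saddle_point_stability_general hα hC.le hβ ha_coercive ha_bdd
    (satisfiesInfSup_of_le_sSup hb) ⟨hprimal, hconstraint⟩
end

section
/- Let X > 0 and Y > 0 be real numbers. For integers i ≥ 1 and j ≥ 0, define φ_{ij}(x,y) = sin(iπx/X)·(cos(2jπy/Y) + sin(2jπy/Y)). Let u : ℝ² → ℝ be integrable on the rectangle (0,X) × (0,Y), and define its transverse average ū(x) = (1/Y) ∫₀^Y u(x,y) dy. Then the following inequality of (possibly infinite) sums of nonnegative terms holds: Y² · ∑_{i≥1} (1 + (iπ/X)²)^{1/2} · (∫₀^X ū(x) sin(iπx/X) dx)² ≤ ∑_{i≥1} ∑_{j≥0} (1 + (iπ/X)² + (2jπ/Y)²)^{1/2} · (∫₀^X ∫₀^Y u(x,y) φ_{ij}(x,y) dy dx)². In particular, if the right-hand side (the spectrally defined squared H^{1/2}_{00}-norm of u on the rectangle) is finite, then the left-hand side (Y² times the spectrally defined squared H^{1/2}_{00}-norm of ū on (0,X)) is finite. -/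
/-!
Since `φ_{i0}(x,y) = sin(iπx/X)` does not depend on `y`, the coefficient of `u` on `φ_{i0}` is `Y`
times the coefficient of the transverse average on `sin(iπx/X)`, and the two eigenvalues agree.
Hence `Y²` times the `i`-th term on the left is the `j = 0` term of the inner sum on the right,
whatever nonnegative function of the eigenvalue is used as weight, and the terms with `j ≥ 1` are
nonnegative.
-/

open Real MeasureTheory intervalIntegral

/-- The eigenfunctions `φ_{ij}(x,y) = sin(iπx/X)(cos(2jπy/Y) + sin(2jπy/Y))`
of the Laplacian on the rectangle `(0,X) × (0,Y)` with Dirichlet conditions in `x`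
and periodic conditions in `y`. -/
noncomputable def phiRect (X Y : ℝ) (i j : ℕ) (x y : ℝ) : ℝ :=
  Real.sin ((i : ℝ) * π * x / X) *
    (Real.cos (2 * (j : ℝ) * π * y / Y) + Real.sin (2 * (j : ℝ) * π * y / Y))

open scoped ENNReal

/-- The transverse average `ū(x) = (1/Y) ∫₀^Y u(x,y) dy`. -/
noncomputable def transverseAverage (Y : ℝ) (u : ℝ × ℝ → ℝ) (x : ℝ) : ℝ :=
  (1 / Y) * ∫ y in (0 : ℝ)..Y, u (x, y)

/-- The coefficient of `f` on the (unnormalized) Dirichlet eigenfunction `sin(iπx/X)` of `(0,X)`. -/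
noncomputable def sineCoeff (X : ℝ) (f : ℝ → ℝ) (i : ℕ) : ℝ :=
  ∫ x in (0 : ℝ)..X, f x * Real.sin ((i : ℝ) * π * x / X)

/-- The coefficient of `u` on the (unnormalized) eigenfunction `φ_{ij}` of the rectangle, as an
iterated integral. -/
noncomputable def rectCoeff (X Y : ℝ) (u : ℝ × ℝ → ℝ) (i j : ℕ) : ℝ :=
  ∫ x in (0 : ℝ)..X, ∫ y in (0 : ℝ)..Y, u (x, y) * phiRect X Y i j x y

/-- The Dirichlet eigenvalue `ρ_i = (iπ/X)²` of the interval `(0,X)`. -/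
noncomputable def intervalEigenvalue (X : ℝ) (i : ℕ) : ℝ :=
  ((i : ℝ) * π / X) ^ 2

/-- The eigenvalue `ρ_{ij} = (iπ/X)² + (2jπ/Y)²` of the rectangle, belonging to `φ_{ij}`. -/
noncomputable def rectEigenvalue (X Y : ℝ) (i j : ℕ) : ℝ :=
  intervalEigenvalue X i + (2 * (j : ℝ) * π / Y) ^ 2

/-- The squared spectral norm on `(0,X)` with weight `w`, a function of the eigenvalue; the weight
`w ρ = (1 + ρ) ^ s` gives the norm of order `s`. The modes `i ≥ 1` are indexed by `i + 1`. -/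
noncomputable def intervalSpectralNormSq (w : ℝ → ℝ≥0∞) (X : ℝ) (f : ℝ → ℝ) : ℝ≥0∞ :=
  ∑' i : ℕ, w (intervalEigenvalue X (i + 1)) * ENNReal.ofReal (sineCoeff X f (i + 1) ^ 2)

/-- The squared spectral norm on the rectangle `(0,X) × (0,Y)` with weight `w`, the counterpart of
`intervalSpectralNormSq`. -/
noncomputable def rectSpectralNormSq (w : ℝ → ℝ≥0∞) (X Y : ℝ) (u : ℝ × ℝ → ℝ) : ℝ≥0∞ :=
  ∑' i : ℕ, ∑' j : ℕ,
    w (rectEigenvalue X Y (i + 1) j) * ENNReal.ofReal (rectCoeff X Y u (i + 1) j ^ 2)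

theorem phiRect_zero_right (X Y : ℝ) (i : ℕ) (x y : ℝ) :
    phiRect X Y i 0 x y = Real.sin ((i : ℝ) * π * x / X) := by
  simp [phiRect]

theorem rectEigenvalue_zero_right (X Y : ℝ) (i : ℕ) :
    rectEigenvalue X Y i 0 = intervalEigenvalue X i := by
  simp [rectEigenvalue]

theorem mul_transverseAverage {Y : ℝ} (hY : Y ≠ 0) (u : ℝ × ℝ → ℝ) (x : ℝ) :
    Y * transverseAverage Y u x = ∫ y in (0 : ℝ)..Y, u (x, y) := by
  rw [transverseAverage, ← mul_assoc, mul_one_div_cancel hY, one_mul]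

theorem integral_integral_mul_eq_mul_integral_transverseAverage {Y : ℝ} (hY : Y ≠ 0)
    (u : ℝ × ℝ → ℝ) (g : ℝ → ℝ) (a b : ℝ) :
    ∫ x in a..b, ∫ y in (0 : ℝ)..Y, u (x, y) * g x =
      Y * ∫ x in a..b, transverseAverage Y u x * g x := by
  simp_rw [intervalIntegral.integral_mul_const, ← mul_transverseAverage hY, mul_assoc,
    intervalIntegral.integral_const_mul]

theorem rectCoeff_zero_right (X : ℝ) {Y : ℝ} (hY : Y ≠ 0) (u : ℝ × ℝ → ℝ) (i : ℕ) :
    rectCoeff X Y u i 0 = Y * sineCoeff X (transverseAverage Y u) i := by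
  simp_rw [rectCoeff, phiRect_zero_right]
  exact integral_integral_mul_eq_mul_integral_transverseAverage hY u _ 0 X

theorem spectral_norm_transverse_average_general (w : ℝ → ℝ≥0∞) (X : ℝ) {Y : ℝ} (hY : Y ≠ 0)
    (u : ℝ × ℝ → ℝ) :
    ENNReal.ofReal (Y ^ 2) * intervalSpectralNormSq w X (transverseAverage Y u) ≤
      rectSpectralNormSq w X Y u := by
  rw [intervalSpectralNormSq, ← ENNReal.tsum_mul_left]
  refine ENNReal.tsum_le_tsum fun i => ?_
  calc
    ENNReal.ofReal (Y ^ 2) * (w (intervalEigenvalue X (i + 1)) *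
          ENNReal.ofReal (sineCoeff X (transverseAverage Y u) (i + 1) ^ 2))
        = w (rectEigenvalue X Y (i + 1) 0) *
          ENNReal.ofReal (rectCoeff X Y u (i + 1) 0 ^ 2) := by
      rw [rectEigenvalue_zero_right, rectCoeff_zero_right X hY, mul_pow,
        ENNReal.ofReal_mul (sq_nonneg Y), mul_left_comm]
    _ ≤ ∑' j : ℕ, w (rectEigenvalue X Y (i + 1) j) *
          ENNReal.ofReal (rectCoeff X Y u (i + 1) j ^ 2) := ENNReal.le_tsum 0

/-- **Spectral `H^{1/2}_{00}`-bound for the transverse average.**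
For `u` integrable on the rectangle `(0,X) × (0,Y)`, with transverse average
`ū(x) = (1/Y)∫₀^Y u(x,y) dy`, the quantity `Y²` times the spectrally defined
squared `H^{1/2}_{00}`-norm of `ū` on `(0,X)` is bounded by the spectrally
defined squared `H^{1/2}_{00}`-norm of `u` on the rectangle (as an inequality
of sums of nonnegative terms in the extended reals).  In particular, if the
right-hand side is finite, so is the left-hand side. -/
theorem spectral_norm_transverse_average (X Y : ℝ) (hX : 0 < X) (hY : 0 < Y)
    (u : ℝ × ℝ → ℝ) (hu : IntegrableOn u (Set.Ioo 0 X ×ˢ Set.Ioo 0 Y)) :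
    (ENNReal.ofReal (Y ^ 2) *
        ∑' i : ℕ,
          ENNReal.ofReal
            (Real.sqrt (1 + (((i : ℝ) + 1) * π / X) ^ 2) *
              (∫ x in (0 : ℝ)..X,
                  ((1 / Y) * ∫ y in (0 : ℝ)..Y, u (x, y)) *
                    Real.sin (((i : ℝ) + 1) * π * x / X)) ^ 2))
      ≤ ∑' i : ℕ, ∑' j : ℕ,
          ENNReal.ofReal
            (Real.sqrt (1 + (((i : ℝ) + 1) * π / X) ^ 2 + (2 * (j : ℝ) * π / Y) ^ 2) *
              (∫ x in (0 : ℝ)..X,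
                  ∫ y in (0 : ℝ)..Y, u (x, y) * phiRect X Y (i + 1) j x y) ^ 2) := by
  simpa only [intervalSpectralNormSq, rectSpectralNormSq, intervalEigenvalue, rectEigenvalue,
    sineCoeff, rectCoeff, transverseAverage, Nat.cast_add, Nat.cast_one, ← add_assoc,
    ← ENNReal.ofReal_mul (Real.sqrt_nonneg _)]
    using spectral_norm_transverse_average_general (fun ρ => ENNReal.ofReal √(1 + ρ)) X hY.ne' u
end
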